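/- arXiv:2603.07945 — 2 statements merged into one kernel-verified Lean document; each statement's English description precedes it below -/
import Mathlib

section
/- Let R be a henselian Noetherian local ring and 𝒳 a resolving subcategory of the category of finitely generated R-modules. If 𝒳 is not contravariantly infinite (i.e. some finitely generated R-module outside 𝒳 admits a right 𝒳-approximation), then every module in 𝒳 of finite projective dimension is free; that is, 𝒳 ∩ fpd R = add R. -/
open CategoryTheory IsLocalRing

universe u

noncomputable section

/-- The `i`-th Ext module of two `R`-modules. -/
abbrev ExtMod (R : Type u) [CommRing R] (i : ℕ) (M N : ModuleCat.{u} R) : ModuleCat R :=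
  ((Ext R (ModuleCat.{u} R) i).obj (Opposite.op M)).obj N

/-- Vanishing of the `i`-th Ext module: `Ext_R^i(M, N) = 0`. -/
def ExtVanish (R : Type u) [CommRing R] (i : ℕ) (M N : ModuleCat.{u} R) : Prop :=
  Subsingleton (ExtMod R i M N)

variable (R : Type u) [CommRing R]

/-- `0 → A → B → C → 0` is a short exact sequence. -/
def IsSES {A B C : ModuleCat.{u} R} (f : A →ₗ[R] B) (g : B →ₗ[R] C) : Prop :=
  Function.Injective f ∧ Function.Exact f g ∧ Function.Surjective g

/-- A resolving subcategory of the category of finitely generated `R`-modules. -/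
structure IsResolving (𝒳 : Set (ModuleCat.{u} R)) : Prop where
  finite : ∀ M ∈ 𝒳, Module.Finite R M
  isoClosed : ∀ {M N : ModuleCat.{u} R}, M ∈ 𝒳 → (↥M ≃ₗ[R] ↥N) → N ∈ 𝒳
  freeMem : ∀ M : ModuleCat.{u} R, Module.Finite R M → Module.Free R M → M ∈ 𝒳
  summandClosed : ∀ M N : ModuleCat.{u} R, ModuleCat.of R (↥M × ↥N) ∈ 𝒳 → M ∈ 𝒳
  extClosed : ∀ (A B C : ModuleCat.{u} R) (f : A →ₗ[R] B) (g : B →ₗ[R] C),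
    IsSES R f g → A ∈ 𝒳 → C ∈ 𝒳 → B ∈ 𝒳
  kerClosed : ∀ (A B C : ModuleCat.{u} R) (f : A →ₗ[R] B) (g : B →ₗ[R] C),
    IsSES R f g → B ∈ 𝒳 → C ∈ 𝒳 → A ∈ 𝒳

/-- `f : X → M` is a right `𝒳`-approximation of `M`. -/
def IsRightApprox (𝒳 : Set (ModuleCat.{u} R)) {X M : ModuleCat.{u} R} (f : X →ₗ[R] M) : Prop :=
  X ∈ 𝒳 ∧ ∀ W ∈ 𝒳, ∀ g : ↥W →ₗ[R] ↥M, ∃ h : ↥W →ₗ[R] ↥X, f ∘ₗ h = g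

/-- `M` admits a right `𝒳`-approximation. -/
def HasRightApprox (𝒳 : Set (ModuleCat.{u} R)) (M : ModuleCat.{u} R) : Prop :=
  ∃ (X : ModuleCat.{u} R) (f : X →ₗ[R] M), IsRightApprox R 𝒳 f

/-- `𝒳` is contravariantly infinite: no finitely generated module outside `𝒳` admits
a right `𝒳`-approximation. -/
def ContravariantlyInfinite (𝒳 : Set (ModuleCat.{u} R)) : Prop :=
  ∀ M : ModuleCat.{u} R, Module.Finite R M → M ∉ 𝒳 → ¬ HasRightApprox R 𝒳 M

/-- `𝒳` is contravariantly finite: every finitely generated module admits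
a right `𝒳`-approximation. -/
def ContravariantlyFinite (𝒳 : Set (ModuleCat.{u} R)) : Prop :=
  ∀ M : ModuleCat.{u} R, Module.Finite R M → HasRightApprox R 𝒳 M

/-- The restricted functor `Hom_R(-, C)|_𝒳` is finitely presented, i.e. `C ∈ 𝒞(𝒳)`. -/
def MemCC (𝒳 : Set (ModuleCat.{u} R)) (C : ModuleCat.{u} R) : Prop :=
  ∃ (X₀ X₁ : ModuleCat.{u} R) (g : ↥X₁ →ₗ[R] ↥X₀) (f : ↥X₀ →ₗ[R] ↥C), X₀ ∈ 𝒳 ∧ X₁ ∈ 𝒳 ∧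
    ∀ W ∈ 𝒳, Function.Surjective (fun h : ↥W →ₗ[R] ↥X₀ => f ∘ₗ h) ∧
      Function.Exact (fun h : ↥W →ₗ[R] ↥X₁ => g ∘ₗ h) (fun h : ↥W →ₗ[R] ↥X₀ => f ∘ₗ h)

/-- `𝒳` is coherent: `𝒞(𝒳) = rap 𝒳`. -/
def Coherent (𝒳 : Set (ModuleCat.{u} R)) : Prop :=
  ∀ M : ModuleCat.{u} R, Module.Finite R M → (MemCC R 𝒳 M ↔ HasRightApprox R 𝒳 M)

/-- The right Ext-orthogonal class `𝒳^⊥` of a class `𝒳` of finitely generated modules. -/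
def XPerp (𝒳 : Set (ModuleCat.{u} R)) : Set (ModuleCat.{u} R) :=
  {Y | Module.Finite R Y ∧ ∀ X ∈ 𝒳, ∀ i, 0 < i → ExtVanish R i X Y}

/-- The projective dimension of `M` is at most `n`. -/
def ProjDimLE (M : ModuleCat.{u} R) (n : ℕ) : Prop :=
  ∀ N : ModuleCat.{u} R, ∀ i, n < i → ExtVanish R i M N

/-- The depth of an `R`-module over a local ring: `inf { i | Ext^i(k, M) ≠ 0 }`. -/
def moduleDepth [IsLocalRing R] (M : ModuleCat.{u} R) : ℕ∞ :=
  sInf ((fun i : ℕ => (i : ℕ∞)) ''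
    {i : ℕ | ¬ ExtVanish R i (ModuleCat.of R (ResidueField R)) M})

/-- `M` is a maximal Cohen–Macaulay `R`-module: `depth M ≥ dim R`. -/
def IsMCM [IsLocalRing R] (M : ModuleCat.{u} R) : Prop :=
  ringKrullDim R ≤ (moduleDepth R M : WithBot ℕ∞)

/-- A Gorenstein local ring: `∃ n, Ext^i(M, R) = 0` for every finitely generated `M`
and every `i > n`. -/
def IsGorensteinLocalRing : Prop :=
  ∃ n : ℕ, ∀ M : ModuleCat.{u} R, Module.Finite R M →
    ∀ i, n < i → ExtVanish R i M (ModuleCat.of R R)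

/-- A regular local ring: Noetherian local with `dim R = dim_k 𝔪/𝔪²`. -/
def IsRegularLocal [IsLocalRing R] : Prop :=
  IsNoetherianRing R ∧
    ringKrullDim R = (Module.finrank (ResidueField R) (CotangentSpace R) : ℕ)

/-- Witness that the local ring `R` is a complete intersection: its `𝔪`-adic completion
is `Q/(f₁, …, f_c)` for a regular local ring `Q` and a `Q`-regular sequence `f₁, …, f_c`. -/
structure CompleteIntersectionWitness [IsLocalRing R] : Type (u + 1) where
  Q : Type u
  [commRing : CommRing Q]
  [localRing : IsLocalRing Q]
  regular : IsRegularLocal Q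
  fs : List Q
  regSeq : RingTheory.Sequence.IsRegular Q fs
  equiv : AdicCompletion (maximalIdeal R) R ≃+* Q ⧸ Ideal.span {x : Q | x ∈ fs}

/-- The local ring `R` is a complete intersection. -/
def IsCompleteIntersection [IsLocalRing R] : Prop :=
  Nonempty (CompleteIntersectionWitness R)

end

/-!
Let `f : X → C` be a right `𝒳`-approximation with kernel `Y`, let `0 → Q → P → W → 0` be exact
with `W ∈ 𝒳`, and write `j : Q → P`. Pushing out along a map `α : Q → Y ⊆ X` gives an extension
of `W` by `X`, which lies in `𝒳`; lifting its map to `C` through `f` yields `u : X → Y` and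
`φ : P → Y` with `α = u α + φ j`. If some `z ∈ Q` generates a free direct summand of `Q` while
`j z ∈ 𝔪P`, then `α z` can be any `y ∈ Y`, so every `y ∈ Y` is congruent to some `u y` modulo
`𝔪Y`. Composing finitely many of the maps `1 - u` makes `u` uniform in `y`, and by Nakayama's
lemma `Y` is a direct summand of `X`. Hence so is `C`, and `C ∈ 𝒳`: a class `𝒳` with such a
sequence is contravariantly infinite.

A module `M ∈ 𝒳` of finite projective dimension has, by induction, a free syzygy `K ⊆ F`. If `M`
were not free, `K ⊗ k → F ⊗ k` would not be injective, and an element of `K ∩ 𝔪F` outside `𝔪K`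
would be such a `z`.
-/

section ProjectiveDimension

theorem subsingleton_abelianExt_succ_iff_isZero_ext (R : Type*) [Ring R] {C : Type*} [Category* C]
    [Abelian C] [Linear R C] [EnoughProjectives C] [HasExt C] (X Y : C) (n : ℕ) :
    Subsingleton (Abelian.Ext X Y (n + 1)) ↔
      Limits.IsZero (((Ext R C (n + 1)).obj (Opposite.op X)).obj Y) := by
  let P := projectiveResolution X
  rw [(P.isoExt (R := R) (n + 1) Y).isZero_iff, ← HomologicalComplex.exactAt_iff_isZero_homology,
    HomologicalComplex.exactAt_iff' _ n (n + 1) (n + 2) (by simp) (by simp),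
    ShortComplex.moduleCat_exact_iff]
  refine ⟨fun h f hf ↦ ?_, fun h ↦ subsingleton_of_forall_eq 0 fun e ↦ ?_⟩
  · exact (P.extMk_eq_zero_iff f (n + 2) rfl hf n rfl).1 (Subsingleton.elim _ _)
  · obtain ⟨f, hf, rfl⟩ := P.extMk_surjective e (n + 2) rfl
    exact (P.extMk_eq_zero_iff f (n + 2) rfl hf n rfl).2 (h f hf)

theorem projDimLE_iff_hasProjectiveDimensionLE {R : Type u} [CommRing R] {M : ModuleCat.{u} R}
    {n : ℕ} : ProjDimLE R M n ↔ HasProjectiveDimensionLE M n := by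
  have extVanish_iff (N : ModuleCat.{u} R) (i : ℕ) (hi : n < i) :
      ExtVanish R i M N ↔ Subsingleton (Abelian.Ext M N i) := by
    obtain ⟨j, rfl⟩ := Nat.exists_eq_succ_of_ne_zero (Nat.ne_zero_of_lt hi)
    rw [ExtVanish, ← ModuleCat.isZero_iff_subsingleton,
      ← subsingleton_abelianExt_succ_iff_isZero_ext]
  refine ⟨fun h ↦ (hasProjectiveDimensionLT_iff M (n + 1)).2 fun i hi N e ↦ ?_,
    fun h N i hi ↦ (extVanish_iff N i hi).2
      (HasProjectiveDimensionLT.subsingleton M (n + 1) i hi N)⟩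
  have := (extVanish_iff N i hi).1 (h N i hi)
  exact Subsingleton.elim e 0

end ProjectiveDimension

section Retraction

theorem bijective_one_sub_of_range_le_smul_top {R N : Type*} [CommRing R] [AddCommGroup N]
    [Module R N] [Module.Finite R N] {I : Ideal R} (hI : I ≤ Ideal.jacobson ⊥) {v : Module.End R N}
    (hv : LinearMap.range v ≤ I • ⊤) : Function.Bijective (1 - v : Module.End R N) := by
  refine OrzechProperty.bijective_of_surjective_endomorphism _ (LinearMap.range_eq_top.1 ?_)
  refine top_le_iff.1 (Submodule.le_of_le_smul_of_le_jacobson_bot Module.Finite.fg_top hI ?_)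
  intro y _
  have hy : (1 - v) y + v y = y := by simp
  rw [← hy]
  exact Submodule.add_mem_sup ⟨y, rfl⟩ (hv ⟨y, rfl⟩)

/-- The endomorphisms of a submodule `N` of `X` which differ from the identity by an endomorphism
extending to a map `X → N`. -/
def oneSubExtendable {R X : Type*} [Ring R] [AddCommGroup X] [Module R X] (N : Submodule R X) :
    Submonoid (Module.End R N) where
  carrier := {v | ∃ u : X →ₗ[R] N, u ∘ₗ N.subtype = 1 - v}
  one_mem' := ⟨0, by simp⟩
  mul_mem' := by
    rintro v w ⟨a, ha⟩ ⟨b, hb⟩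
    refine ⟨a + v ∘ₗ b, ?_⟩
    rw [LinearMap.add_comp, LinearMap.comp_assoc, ha, hb, ← Module.End.mul_eq_comp, mul_sub,
      mul_one, sub_add_sub_cancel]

theorem exists_mem_submonoid_range_le_smul_top {R N : Type*} [Semiring R] [AddCommMonoid N]
    [Module R N] [Module.Finite R N] (I : Ideal R) (S : Submonoid (Module.End R N))
    (hS : ∀ y, ∃ v ∈ S, v y ∈ I • (⊤ : Submodule R N)) :
    ∃ v ∈ S, LinearMap.range v ≤ I • ⊤ := by
  classical
  obtain ⟨s, hs⟩ := Module.Finite.fg_top (R := R) (M := N)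
  suffices h : ∃ v ∈ S, ∀ y ∈ s, v y ∈ I • (⊤ : Submodule R N) by
    obtain ⟨v, hvS, hv⟩ := h
    refine ⟨v, hvS, ?_⟩
    rw [LinearMap.range_eq_map]
    nth_rw 1 [← hs]
    exact (Submodule.map_span_le v s _).2 hv
  clear hs
  induction s using Finset.induction_on with
  | empty => exact ⟨1, S.one_mem, by simp⟩
  | insert y s _ ih =>
    obtain ⟨v, hvS, hv⟩ := ih
    obtain ⟨w, hwS, hw⟩ := hS (v y)
    refine ⟨w * v, S.mul_mem hwS hvS, Finset.forall_mem_insert _ _ _ |>.2 ⟨hw, fun z hz ↦ ?_⟩⟩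
    exact Submodule.smul_top_le_comap_smul_top I w (hv z hz)

theorem exists_retraction_of_forall_sub_mem_smul_top {R X : Type*} [CommRing R] [AddCommGroup X]
    [Module R X] {I : Ideal R} (hI : I ≤ Ideal.jacobson ⊥) (N : Submodule R X) [Module.Finite R N]
    (hN : ∀ y : N, ∃ u : X →ₗ[R] N, y - u y ∈ I • (⊤ : Submodule R N)) :
    ∃ r : X →ₗ[R] N, r ∘ₗ N.subtype = LinearMap.id := by
  obtain ⟨v, ⟨u, hu⟩, hv⟩ :=
    exists_mem_submonoid_range_le_smul_top I (oneSubExtendable N) fun y ↦ by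
      obtain ⟨u, hu⟩ := hN y
      exact ⟨1 - u ∘ₗ N.subtype, ⟨u, (sub_sub_cancel _ _).symm⟩, hu⟩
  let e := LinearEquiv.ofBijective (1 - v) (bijective_one_sub_of_range_le_smul_top hI hv)
  refine ⟨e.symm ∘ₗ u, ?_⟩
  rw [LinearMap.comp_assoc, hu]
  exact e.symm_comp

end Retraction

section Pushout

variable {R Q X P : Type*} [Ring R] [AddCommGroup Q] [Module R Q] [AddCommGroup X] [Module R X]
  [AddCommGroup P] [Module R P] {M : Type*} [AddCommGroup M] [Module R M]

/-- The pushout of `β : Q → X` and `j : Q → P`, as the quotient of `X × P` that identifies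
`(β z, 0)` with `(0, j z)`. -/
abbrev PushoutModule (β : Q →ₗ[R] X) (j : Q →ₗ[R] P) : Type _ :=
  (X × P) ⧸ LinearMap.range (β.prod (-j))

namespace PushoutModule

/-- The canonical map from the first module to the pushout. -/
def inl (β : Q →ₗ[R] X) (j : Q →ₗ[R] P) : X →ₗ[R] PushoutModule β j :=
  Submodule.mkQ _ ∘ₗ LinearMap.inl R X P

/-- The canonical map from the second module to the pushout. -/
def inr (β : Q →ₗ[R] X) (j : Q →ₗ[R] P) : P →ₗ[R] PushoutModule β j :=
  Submodule.mkQ _ ∘ₗ LinearMap.inr R X P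

variable {β : Q →ₗ[R] X} {j : Q →ₗ[R] P}

/-- The map out of the pushout induced by a cocone. -/
def desc (f : X →ₗ[R] M) (g : P →ₗ[R] M) (h : f ∘ₗ β = g ∘ₗ j) : PushoutModule β j →ₗ[R] M :=
  Submodule.liftQ _ (f.coprod g) <| by
    rintro _ ⟨z, rfl⟩
    simpa [← sub_eq_add_neg, sub_eq_zero] using LinearMap.congr_fun h z

theorem inl_comp_eq : inl β j ∘ₗ β = inr β j ∘ₗ j := by
  ext z
  exact (Submodule.Quotient.eq _).2 ⟨z, by simp⟩

@[simp]
theorem desc_inl (f : X →ₗ[R] M) (g : P →ₗ[R] M) (h : f ∘ₗ β = g ∘ₗ j) (x : X) :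
    desc f g h (inl β j x) = f x := by
  simp [desc, inl]

@[simp]
theorem desc_inr (f : X →ₗ[R] M) (g : P →ₗ[R] M) (h : f ∘ₗ β = g ∘ₗ j) (p : P) :
    desc f g h (inr β j p) = g p := by
  simp [desc, inr]

theorem exists_inl_add_inr (y : PushoutModule β j) : ∃ x p, inl β j x + inr β j p = y := by
  obtain ⟨⟨x, p⟩, rfl⟩ := Submodule.mkQ_surjective _ y
  exact ⟨x, p, by simp [inl, inr, ← Submodule.Quotient.mk_add]⟩

theorem inl_injective (hj : Function.Injective j) : Function.Injective (inl β j) := by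
  refine (injective_iff_map_eq_zero _).2 fun x hx ↦ ?_
  obtain ⟨z, hz⟩ := (Submodule.Quotient.mk_eq_zero _).1 hx
  obtain ⟨rfl, hz0⟩ : β z = x ∧ j z = 0 := by simpa using hz
  rw [(map_eq_zero_iff j hj).1 hz0, map_zero]

theorem exact_inl_desc {π : P →ₗ[R] M} (hjπ : Function.Exact j π) :
    Function.Exact (inl β j) (desc 0 π (by simp [hjπ.linearMap_comp_eq_zero])) := by
  refine fun y ↦ ⟨fun hy ↦ ?_, ?_⟩
  · obtain ⟨x, p, rfl⟩ := exists_inl_add_inr y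
    obtain ⟨z, rfl⟩ := (hjπ p).1 (by simpa using hy)
    exact ⟨x + β z, by simpa using LinearMap.congr_fun inl_comp_eq z⟩
  · rintro ⟨x, rfl⟩
    simp

theorem desc_surjective (f : X →ₗ[R] M) {g : P →ₗ[R] M} (h : f ∘ₗ β = g ∘ₗ j)
    (hg : Function.Surjective g) : Function.Surjective (desc f g h) := fun m ↦ by
  obtain ⟨p, rfl⟩ := hg m
  exact ⟨inr β j p, desc_inr f g h p⟩

end PushoutModule

end Pushout

section Approximation

variable {R : Type u} [CommRing R] {𝒳 : Set (ModuleCat.{u} R)}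

namespace IsResolving

theorem of_free_mem (h𝒳 : IsResolving R 𝒳) (F : Type u) [AddCommGroup F] [Module R F]
    [Module.Finite R F] [Module.Free R F] : ModuleCat.of R F ∈ 𝒳 :=
  h𝒳.freeMem (.of R F) ‹_› ‹_›

theorem pushout_mem (h𝒳 : IsResolving R 𝒳) {Q P W X : ModuleCat.{u} R} {j : Q →ₗ[R] P}
    {π : P →ₗ[R] W} (hjπ : IsSES R j π) (hW : W ∈ 𝒳) (hX : X ∈ 𝒳) (β : Q →ₗ[R] X) :
    ModuleCat.of R (PushoutModule β j) ∈ 𝒳 :=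
  let ⟨hj, hex, hπ⟩ := hjπ
  h𝒳.extClosed X (.of R (PushoutModule β j)) W (PushoutModule.inl β j) (PushoutModule.desc 0 π _)
    ⟨PushoutModule.inl_injective hj, PushoutModule.exact_inl_desc hex,
      PushoutModule.desc_surjective 0 _ hπ⟩ hX hW

theorem ker_mem (h𝒳 : IsResolving R 𝒳) {F M : ModuleCat.{u} R} (hF : F ∈ 𝒳) (hM : M ∈ 𝒳)
    {p : F →ₗ[R] M} (hp : Function.Surjective p) : ModuleCat.of R (LinearMap.ker p) ∈ 𝒳 :=
  h𝒳.kerClosed (.of R (LinearMap.ker p)) F M (LinearMap.ker p).subtype p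
    ⟨Submodule.injective_subtype _, p.exact_subtype_ker_map, hp⟩ hF hM

theorem mem_of_retraction_ker (h𝒳 : IsResolving R 𝒳) {X M : ModuleCat.{u} R} (hX : X ∈ 𝒳)
    {f : X →ₗ[R] M} (hf : Function.Surjective f) {r : X →ₗ[R] LinearMap.ker f}
    (hr : r ∘ₗ (LinearMap.ker f).subtype = LinearMap.id) : M ∈ 𝒳 :=
  let e := (f.exact_subtype_ker_map.splitInjectiveEquiv hf ⟨r, hr⟩).1
  h𝒳.summandClosed M (.of R (LinearMap.ker f))
    (h𝒳.isoClosed hX (e.trans (LinearEquiv.prodComm R _ _)))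

end IsResolving

namespace IsRightApprox

variable {X C : ModuleCat.{u} R} {f : X →ₗ[R] C}

theorem surjective (hf : IsRightApprox R 𝒳 f) (h𝒳 : IsResolving R 𝒳) :
    Function.Surjective f := fun c ↦ by
  obtain ⟨h, hh⟩ := hf.2 _ (h𝒳.of_free_mem R) (LinearMap.toSpanSingleton R C c)
  exact ⟨h (1 : R), by simpa using LinearMap.congr_fun hh (1 : R)⟩

theorem exists_forall_apply_eq_add (hf : IsRightApprox R 𝒳 f) (h𝒳 : IsResolving R 𝒳)
    {Q P W : ModuleCat.{u} R} {j : Q →ₗ[R] P} {π : P →ₗ[R] W} (hjπ : IsSES R j π) (hW : W ∈ 𝒳)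
    (α : Q →ₗ[R] LinearMap.ker f) :
    ∃ (u : X →ₗ[R] LinearMap.ker f) (φ : P →ₗ[R] LinearMap.ker f),
      ∀ z, α z = u (α z) + φ (j z) := by
  let β : Q →ₗ[R] X := (LinearMap.ker f).subtype ∘ₗ α
  have hβ : f ∘ₗ β = 0 ∘ₗ j := by ext z; simp [β]
  obtain ⟨h, hh⟩ := hf.2 _ (h𝒳.pushout_mem hjπ hW hf.1 β) (PushoutModule.desc f 0 hβ)
  have f_h_inl (x : X) : f (h (PushoutModule.inl β j x)) = f x :=
    (LinearMap.congr_fun hh _).trans (PushoutModule.desc_inl f 0 hβ x)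
  have f_h_inr (p : P) : f (h (PushoutModule.inr β j p)) = 0 :=
    (LinearMap.congr_fun hh _).trans (PushoutModule.desc_inr f 0 hβ p)
  refine ⟨(LinearMap.id - h ∘ₗ PushoutModule.inl β j).codRestrict _ fun x ↦ by simp [f_h_inl],
    (h ∘ₗ PushoutModule.inr β j).codRestrict _ f_h_inr, fun z ↦ Subtype.ext ?_⟩
  have hz : h (PushoutModule.inl β j (β z)) = h (PushoutModule.inr β j (j z)) :=
    congrArg h (LinearMap.congr_fun PushoutModule.inl_comp_eq z)
  change β z = β z - h (PushoutModule.inl β j (β z)) + h (PushoutModule.inr β j (j z))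
  rw [hz, sub_add_cancel]

end IsRightApprox

theorem IsResolving.contravariantlyInfinite_of_dual_apply_eq_one [IsNoetherianRing R]
    (h𝒳 : IsResolving R 𝒳) {I : Ideal R} (hI : I ≤ Ideal.jacobson ⊥) {Q P W : ModuleCat.{u} R}
    {j : Q →ₗ[R] P} {π : P →ₗ[R] W} (hjπ : IsSES R j π) (hW : W ∈ 𝒳) {ℓ : Module.Dual R Q} {z : Q}
    (hℓ : ℓ z = 1) (hz : j z ∈ I • (⊤ : Submodule R P)) : ContravariantlyInfinite R 𝒳 := by
  rintro C - hC ⟨X, f, hf⟩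
  have : Module.Finite R X := h𝒳.finite X hf.1
  refine hC ?_
  obtain ⟨r, hr⟩ := exists_retraction_of_forall_sub_mem_smul_top hI (LinearMap.ker f) fun y ↦ by
    obtain ⟨u, φ, huφ⟩ := hf.exists_forall_apply_eq_add h𝒳 hjπ hW (ℓ.smulRight y)
    have hy : y = u y + φ (j z) := by simpa [hℓ] using huφ z
    exact ⟨u, sub_eq_iff_eq_add'.2 hy ▸ Submodule.smul_top_le_comap_smul_top I φ hz⟩
  exact h𝒳.mem_of_retraction_ker hf.1 (hf.surjective h𝒳) hr

end Approximation

section Local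

variable {R : Type*} [CommRing R]

theorem lTensor_quotient_injective_of_comap_smul_top_le {M N : Type*} [AddCommGroup M] [Module R M]
    [AddCommGroup N] [Module R N] {I : Ideal R} {j : M →ₗ[R] N}
    (hj : (I • ⊤ : Submodule R N).comap j ≤ I • ⊤) :
    Function.Injective (j.lTensor (R ⧸ I)) := by
  refine (injective_iff_map_eq_zero _).2 fun t ht ↦ ?_
  obtain ⟨x, rfl⟩ := TensorProduct.mk_surjective R M (R ⧸ I) Ideal.Quotient.mk_surjective t
  rw [← LinearMap.mem_ker, LinearMap.ker_tensorProductMk]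
  refine hj ?_
  rwa [Submodule.mem_comap, ← LinearMap.ker_tensorProductMk]

variable [IsLocalRing R]

theorem exists_dual_apply_eq_one_of_notMem_smul_top {K : Type*} [AddCommGroup K] [Module R K]
    [Module.Free R K] {x : K} (hx : x ∉ maximalIdeal R • (⊤ : Submodule R K)) :
    ∃ ℓ : Module.Dual R K, ℓ x = 1 := by
  let b := Module.Free.chooseBasis R K
  obtain ⟨i, hi⟩ : ∃ i, IsUnit (b.repr x i) := by
    by_contra! h
    refine hx ?_
    rw [← b.linearCombination_repr x, Finsupp.linearCombination_apply]
    exact Submodule.sum_mem _ fun i _ ↦ Submodule.smul_mem_smul (h i) trivial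
  obtain ⟨c, hc⟩ := hi.exists_left_inv
  exact ⟨c • b.coord i, hc⟩

end Local

theorem IsResolving.free_of_hasProjectiveDimensionLE {R : Type u} [CommRing R] [IsNoetherianRing R]
    [IsLocalRing R] {𝒳 : Set (ModuleCat.{u} R)} (h𝒳 : IsResolving R 𝒳)
    (h : ¬ ContravariantlyInfinite R 𝒳) (n : ℕ) (M : ModuleCat.{u} R) (hM : M ∈ 𝒳)
    (hpd : HasProjectiveDimensionLE M n) : Module.Free R M := by
  have := h𝒳.finite M hM
  induction n generalizing M with
  | zero =>
    have : Projective M := (projective_iff_hasProjectiveDimensionLE_zero M).2 hpd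
    have : Module.Projective R M := (IsProjective.iff_projective M).2 this
    exact Module.free_of_flat_of_isLocalRing
  | succ n ih =>
    obtain ⟨m, p, hp⟩ := Module.Finite.exists_fin' R M
    have hK : ModuleCat.of R (LinearMap.ker p) ∈ 𝒳 :=
      h𝒳.ker_mem (h𝒳.of_free_mem (Fin m → R)) hM hp
    have hKpd : HasProjectiveDimensionLE (ModuleCat.of R (LinearMap.ker p)) n :=
      ((LinearMap.shortExact_shortComplexKer hp).hasProjectiveDimensionLT_X₃_iff n
        inferInstance).1 hpd
    have hKfree : Module.Free R (LinearMap.ker p) := ih _ hK hKpd (h𝒳.finite _ hK)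
    refine Module.free_of_lTensor_residueField_injective _ p hp p.exact_subtype_ker_map
      (lTensor_quotient_injective_of_comap_smul_top_le fun x hx ↦ ?_)
    by_contra hxK
    obtain ⟨ℓ, hℓ⟩ := exists_dual_apply_eq_one_of_notMem_smul_top hxK
    exact h (h𝒳.contravariantlyInfinite_of_dual_apply_eq_one (Q := .of R (LinearMap.ker p))
      (P := .of R (Fin m → R)) (maximalIdeal_le_jacobson ⊥)
      ⟨Submodule.injective_subtype _, p.exact_subtype_ker_map, hp⟩ hM hℓ hx)

theorem stmt1_general (R : Type u) [CommRing R] [IsNoetherianRing R] [IsLocalRing R]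
    (𝒳 : Set (ModuleCat.{u} R)) (h𝒳 : IsResolving R 𝒳) (h : ¬ ContravariantlyInfinite R 𝒳) :
    (∀ M ∈ 𝒳, (∃ n : ℕ, ProjDimLE R M n) → Module.Free R M) ∧
    𝒳 ∩ {M : ModuleCat.{u} R | ∃ n : ℕ, ProjDimLE R M n} =
      {M : ModuleCat.{u} R | Module.Finite R M ∧ Module.Free R M} := by
  have free_of_mem : ∀ M ∈ 𝒳, (∃ n : ℕ, ProjDimLE R M n) → Module.Free R M :=
    fun M hM ⟨n, hn⟩ ↦
      h𝒳.free_of_hasProjectiveDimensionLE h n M hM (projDimLE_iff_hasProjectiveDimensionLE.1 hn)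
  refine ⟨free_of_mem, Set.ext fun M ↦ ⟨fun ⟨hM, hpd⟩ ↦ ⟨h𝒳.finite M hM, free_of_mem M hM hpd⟩,
    fun ⟨hfin, hfree⟩ ↦ ⟨h𝒳.freeMem M hfin hfree, 0, ?_⟩⟩⟩
  have : Projective M := (IsProjective.iff_projective M).1 Module.Projective.of_free
  exact projDimLE_iff_hasProjectiveDimensionLE.2
    ((projective_iff_hasProjectiveDimensionLE_zero M).1 this)

/-- Over a henselian Noetherian local ring, if a resolving subcategory `𝒳`
is not contravariantly infinite, then every module in `𝒳` of finite projective dimension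
is free; that is, `𝒳 ∩ fpd R = add R`. -/
theorem stmt1 (R : Type u) [CommRing R] [IsNoetherianRing R] [IsLocalRing R]
    [HenselianLocalRing R] (𝒳 : Set (ModuleCat.{u} R)) (h𝒳 : IsResolving R 𝒳)
    (h : ¬ ContravariantlyInfinite R 𝒳) :
    (∀ M ∈ 𝒳, (∃ n : ℕ, ProjDimLE R M n) → Module.Free R M) ∧
    𝒳 ∩ {M : ModuleCat.{u} R | ∃ n : ℕ, ProjDimLE R M n} =
      {M : ModuleCat.{u} R | Module.Finite R M ∧ Module.Free R M} :=
  stmt1_general R 𝒳 h𝒳 h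
end

section
/- Let R be a Gorenstein Noetherian local ring with dim R > 0 and let 𝒳 be a resolving subcategory of the category of finitely generated R-modules all of whose members are maximal Cohen–Macaulay. Then 𝒳 is not contravariantly infinite: there exists a finitely generated R-module outside 𝒳 (namely R/(x) for any R-regular element x ∈ 𝔪) which admits a right 𝒳-approximation. -/
open CategoryTheory IsLocalRing

universe u

/-!
Multiplication by a regular `x ∈ 𝔪` gives a short exact sequence `0 → R → R → R/(x) → 0`, so
`R → R/(x)` is a right `𝒳`-approximation as soon as `Ext¹(W, R) = 0` for all `W ∈ 𝒳`. On the other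
hand `Hom(R/(x), R) = 0`, so the identity of `R/(x)` does not factor through `R → R/(x)`, and
`R/(x) ∉ 𝒳`.

The vanishing of `Ext¹(W, R)` follows from `inj dim R ≤ dim R`, by induction on depth: if `x ∈ 𝔪` is
`W`-regular and `Extⁱ⁺¹(W/xW, R) = 0`, then `x` acts surjectively on `Extⁱ(W, R)`, which is
therefore zero by Nakayama. To bound the injective dimension of a finitely generated `Y`, suppose
`Extⁿ⁺¹(-, Y) = 0` with `n > dim R`. Dividing `R` by a maximal regular sequence yields a module of
projective dimension at most `dim R` containing the residue field `k`, whence `Extⁿ(k, Y) = 0`; for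
a prime `𝔭 ≠ 𝔪` the Nakayama argument gives `Extⁿ(R/𝔭, Y) = 0`, and prime filtrations then give
`Extⁿ(-, Y) = 0`.
-/

open Module Abelian
open scoped Pointwise

section ExtComparison

variable {R : Type u} [CommRing R] {M : ModuleCat.{u} R} (N : ModuleCat.{u} R)

theorem extVanish_iff_exactAt (P : ProjectiveResolution M) (i : ℕ) :
    ExtVanish R i M N ↔ (P.complex.linearYonedaObj R N).ExactAt i := by
  rw [HomologicalComplex.exactAt_iff_isZero_homology, ← (P.isoExt (R := R) i N).isZero_iff,
    ExtVanish, ModuleCat.isZero_iff_subsingleton]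

theorem exactAt_linearYonedaObj_zero_iff (P : ProjectiveResolution M) :
    (P.complex.linearYonedaObj R N).ExactAt 0 ↔ Subsingleton (Ext.{u} M N 0) := by
  rw [HomologicalComplex.exactAt_iff' _ 0 0 1 (by simp) (by simp),
    ShortComplex.exact_iff_mono _ ((P.complex.linearYonedaObj R N).shape 0 0 (by simp)),
    ModuleCat.mono_iff_injective, injective_iff_map_eq_zero, Ext.addEquiv₀.subsingleton_congr]
  let π : P.complex.X 0 ⟶ M := P.π.f 0
  have hπ : P.complex.d 1 0 ≫ π = 0 := P.complex_d_comp_π_f_zero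
  have : Epi π := inferInstanceAs (Epi (P.π.f 0))
  constructor
  · intro h
    refine subsingleton_of_forall_eq 0 fun f => ?_
    rw [← cancel_epi π, Limits.comp_zero]
    refine h (π ≫ f) ?_
    change P.complex.d 1 0 ≫ π ≫ f = 0
    rw [reassoc_of% hπ, Limits.zero_comp]
  · intro h f (hf : P.complex.d 1 0 ≫ f = 0)
    let g : M ⟶ N := P.exact₀.desc f hf
    have hg : π ≫ g = f := P.exact₀.g_desc f hf
    rw [← hg, Subsingleton.elim g 0, Limits.comp_zero]
    rfl

theorem exactAt_linearYonedaObj_succ_iff (P : ProjectiveResolution M) (n : ℕ) :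
    (P.complex.linearYonedaObj R N).ExactAt (n + 1) ↔ Subsingleton (Ext.{u} M N (n + 1)) := by
  rw [HomologicalComplex.exactAt_iff' _ n (n + 1) (n + 2) (by simp) (by simp),
    ShortComplex.moduleCat_exact_iff]
  constructor
  · intro h
    refine subsingleton_of_forall_eq 0 fun a => ?_
    obtain ⟨f, hf, rfl⟩ := P.extMk_surjective a (n + 2) rfl
    exact (P.extMk_eq_zero_iff f _ rfl hf n rfl).2 (h f hf)
  · intro h f hf
    exact (P.extMk_eq_zero_iff f (n + 2) rfl hf n rfl).1 (Subsingleton.elim _ _)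

theorem extVanish_iff_subsingleton_ext (i : ℕ) :
    ExtVanish R i M N ↔ Subsingleton (Ext.{u} M N i) := by
  rw [extVanish_iff_exactAt N (projectiveResolution M)]
  cases i with
  | zero => exact exactAt_linearYonedaObj_zero_iff N _
  | succ n => exact exactAt_linearYonedaObj_succ_iff N _ n

end ExtComparison

section LongExactSequence

universe w v

variable {C : Type*} [Category.{v} C] [Abelian C] [HasExt.{w} C] {S : ShortComplex C}

theorem covariant_subsingleton_ext_X₃ (hS : S.ShortExact) (X : C) (i : ℕ)
    (h₂ : Subsingleton (Ext.{w} X S.X₂ i)) (h₁ : Subsingleton (Ext.{w} X S.X₁ (i + 1))) :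
    Subsingleton (Ext.{w} X S.X₃ i) := by
  refine subsingleton_of_forall_eq 0 fun a => ?_
  obtain ⟨b, rfl⟩ := Ext.covariant_sequence_exact₃ X hS a rfl (Subsingleton.elim _ _)
  rw [Subsingleton.elim b 0, Ext.zero_comp]

theorem contravariant_subsingleton_ext_X₁ (hS : S.ShortExact) (Y : C) (i : ℕ)
    (h₂ : Subsingleton (Ext.{w} S.X₂ Y i)) (h₃ : Subsingleton (Ext.{w} S.X₃ Y (i + 1))) :
    Subsingleton (Ext.{w} S.X₁ Y i) := by
  refine subsingleton_of_forall_eq 0 fun a => ?_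
  obtain ⟨b, rfl⟩ :=
    Ext.contravariant_sequence_exact₁ hS Y a (add_comm 1 i) (Subsingleton.elim _ _)
  rw [Subsingleton.elim b 0, Ext.comp_zero]

theorem contravariant_subsingleton_ext_X₂ (hS : S.ShortExact) (Y : C) (i : ℕ)
    (h₁ : Subsingleton (Ext.{w} S.X₁ Y i)) (h₃ : Subsingleton (Ext.{w} S.X₃ Y i)) :
    Subsingleton (Ext.{w} S.X₂ Y i) := by
  refine subsingleton_of_forall_eq 0 fun a => ?_
  obtain ⟨b, rfl⟩ := Ext.contravariant_sequence_exact₂ hS Y a (Subsingleton.elim _ _)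
  rw [Subsingleton.elim b 0, Ext.comp_zero]

theorem subsingleton_ext_of_iso {X X' : C} (e : X ≅ X') (Y : C) (i : ℕ)
    (h : Subsingleton (Ext.{w} X Y i)) : Subsingleton (Ext.{w} X' Y i) := by
  refine subsingleton_of_forall_eq 0 fun a => ?_
  have ha : (Ext.mk₀ e.inv).comp ((Ext.mk₀ e.hom).comp a (zero_add i)) (zero_add i) = a := by
    simp
  rw [← ha, Subsingleton.elim ((Ext.mk₀ e.hom).comp a (zero_add i)) 0, Ext.comp_zero]

end LongExactSequence

section ShortExact

variable {R : Type u} [CommRing R] {A B C : ModuleCat.{u} R}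

theorem IsSES.shortExact {f : A →ₗ[R] B} {g : B →ₗ[R] C} (h : IsSES R f g) :
    (ModuleCat.shortComplexOfCompEqZero f g h.2.1.linearMap_comp_eq_zero).ShortExact :=
  ModuleCat.shortComplex_shortExact _ h.2.1 h.1 h.2.2

theorem isSES_mkQ_range {f : A →ₗ[R] B} (hf : Function.Injective f) :
    IsSES R (C := ModuleCat.of R (B ⧸ LinearMap.range f)) f (LinearMap.range f).mkQ :=
  ⟨hf, LinearMap.exact_map_mkQ_range f, Submodule.mkQ_surjective _⟩

theorem isSES_lsmul_mkQ {x : R} (hx : x ∈ nonZeroDivisors R) :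
    IsSES R (A := ModuleCat.of R R) (B := ModuleCat.of R R)
      (C := ModuleCat.of R (R ⧸ Ideal.span {x})) (LinearMap.lsmul R R x)
      (Ideal.span {x}).mkQ := by
  refine ⟨Flat.isSMulRegular_of_nonZeroDivisors (M := R) hx, fun y => ?_,
    Submodule.mkQ_surjective _⟩
  rw [Submodule.mkQ_apply, Submodule.Quotient.mk_eq_zero, Ideal.mem_span_singleton']
  simp [mul_comm]

theorem IsSES.exists_extension {f : A →ₗ[R] B} {g : B →ₗ[R] C} (h : IsSES R f g)
    {Y : ModuleCat.{u} R} (hY : Subsingleton (Ext.{u} C Y 1)) (φ : A →ₗ[R] Y) :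
    ∃ ψ : B →ₗ[R] Y, ψ ∘ₗ f = φ := by
  obtain ⟨b, hb⟩ := Ext.contravariant_sequence_exact₁ h.shortExact Y
    (Ext.mk₀ (ModuleCat.ofHom φ)) (add_zero 1) (@Subsingleton.elim _ hY _ _)
  obtain ⟨ψ, rfl⟩ := (Ext.mk₀_bijective _ _).2 b
  rw [Ext.mk₀_comp_mk₀, (Ext.mk₀_bijective _ _).1.eq_iff] at hb
  exact ⟨ψ.hom, congrArg ModuleCat.Hom.hom hb⟩

theorem IsSES.exists_lift {f : A →ₗ[R] B} {g : B →ₗ[R] C} (h : IsSES R f g)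
    {W : ModuleCat.{u} R} (hW : Subsingleton (Ext.{u} W A 1)) (φ : W →ₗ[R] C) :
    ∃ ψ : W →ₗ[R] B, g ∘ₗ ψ = φ := by
  obtain ⟨b, hb⟩ := Ext.covariant_sequence_exact₃ W h.shortExact
    (Ext.mk₀ (ModuleCat.ofHom φ)) rfl (@Subsingleton.elim _ hW _ _)
  obtain ⟨ψ, rfl⟩ := (Ext.mk₀_bijective _ _).2 b
  rw [Ext.mk₀_comp_mk₀, (Ext.mk₀_bijective _ _).1.eq_iff] at hb
  exact ⟨ψ.hom, congrArg ModuleCat.Hom.hom hb⟩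

end ShortExact

section InjectiveDimension

variable {R : Type u} [CommRing R]

theorem injective_of_subsingleton_ext_quotient (Y : ModuleCat.{u} R)
    (h : ∀ I : Ideal R, Subsingleton (Ext.{u} (ModuleCat.of R (R ⧸ I)) Y 1)) :
    CategoryTheory.Injective Y := by
  suffices hBaer : Module.Baer R Y by
    have := hBaer.injective
    exact Module.injective_object_of_injective_module R Y
  intro I φ
  have hI : IsSES R (A := ModuleCat.of R I) (B := ModuleCat.of R R)
      (C := ModuleCat.of R (R ⧸ I)) I.subtype I.mkQ :=
    ⟨I.injective_subtype, LinearMap.exact_subtype_mkQ I, I.mkQ_surjective⟩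
  obtain ⟨ψ, hψ⟩ := hI.exists_extension (h I) φ
  exact ⟨ψ, fun x hx => LinearMap.congr_fun hψ ⟨x, hx⟩⟩

theorem hasInjectiveDimensionLE_of_subsingleton_ext_quotient (Y : ModuleCat.{u} R) (n : ℕ)
    (h : ∀ I : Ideal R, Subsingleton (Ext.{u} (ModuleCat.of R (R ⧸ I)) Y (n + 1))) :
    HasInjectiveDimensionLE Y n := by
  induction n generalizing Y with
  | zero =>
    have := injective_of_subsingleton_ext_quotient Y h
    exact inferInstanceAs (HasInjectiveDimensionLT Y 1)
  | succ n ih =>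
    obtain ⟨J, _, f, _⟩ := EnoughInjectives.presentation Y
    have hS := (isSES_mkQ_range ((ModuleCat.mono_iff_injective f).1 ‹_›)).shortExact
    refine hS.hasInjectiveDimensionLT_X₁ (n + 1) (ih _ fun I => ?_) ?_
    · exact covariant_subsingleton_ext_X₃ hS _ (n + 1) (Ext.subsingleton_of_injective _ J n) (h I)
    · exact inferInstanceAs (HasInjectiveDimensionLT J (n + 1 + 1))

theorem IsGorensteinLocalRing.exists_hasInjectiveDimensionLE (hG : IsGorensteinLocalRing R) :
    ∃ n, HasInjectiveDimensionLE (ModuleCat.of R R) n := by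
  obtain ⟨n, hn⟩ := hG
  refine ⟨n, hasInjectiveDimensionLE_of_subsingleton_ext_quotient _ n fun I => ?_⟩
  exact (extVanish_iff_subsingleton_ext _ _).1
    (hn _ (inferInstanceAs (Module.Finite R (R ⧸ I))) (n + 1) n.lt_succ_self)

end InjectiveDimension

theorem isSMulRegular_quotient_of_notMem {R : Type*} [CommRing R] {p : Ideal R} [p.IsPrime]
    {x : R} (hx : x ∉ p) : IsSMulRegular (R ⧸ p) x :=
  (isSMulRegular_algebraMap_iff (R ⧸ p)).1
    (IsSMulRegular.of_ne_zero (by simpa [Ideal.Quotient.eq_zero_iff_mem] using hx))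

section LocalRing

variable {R : Type u} [CommRing R] [IsNoetherianRing R] [IsLocalRing R]

theorem subsingleton_residueField_linearMap_iff {M : Type*} [AddCommGroup M] [Module R M]
    [Module.Finite R M] :
    Subsingleton (ResidueField R →ₗ[R] M) ↔ ∃ x ∈ maximalIdeal R, IsSMulRegular M x := by
  have hann : annihilator R (ResidueField R) = maximalIdeal R := Ideal.annihilator_quotient
  rw [IsSMulRegular.subsingleton_linearMap_iff, hann]

theorem exists_isSMulRegular_of_subsingleton_ext_residueField (M : ModuleCat.{u} R)
    [Module.Finite R M]
    (h : Subsingleton (Ext.{u} (ModuleCat.of R (ResidueField R)) M 0)) :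
    ∃ x ∈ maximalIdeal R, IsSMulRegular M x :=
  have := Ext.addEquiv₀.subsingleton_congr.1 h
  subsingleton_residueField_linearMap_iff.1
    (ModuleCat.homAddEquiv (M := ModuleCat.of R (ResidueField R))).symm.subsingleton

theorem exists_isSMulRegular_or_exists_injective_residueField (M : Type*) [AddCommGroup M]
    [Module R M] [Module.Finite R M] :
    (∃ x ∈ maximalIdeal R, IsSMulRegular M x) ∨
      ∃ f : ResidueField R →ₗ[R] M, Function.Injective f := by
  rw [← subsingleton_residueField_linearMap_iff, or_iff_not_imp_left,
    not_subsingleton_iff_nontrivial]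
  intro _
  obtain ⟨f, hf⟩ := exists_ne (0 : ResidueField R →ₗ[R] M)
  have : IsSimpleModule R (ResidueField R) :=
    isSimpleModule_iff_isCoatom.2 (Ideal.isMaximal_def.1 inferInstance)
  exact ⟨f, LinearMap.injective_of_ne_zero hf⟩

theorem subsingleton_ext_of_subsingleton_ext_quotSMulTop (M N : ModuleCat.{u} R)
    [Module.Finite R M] [Module.Finite R N] {x : R} (hx : x ∈ maximalIdeal R)
    (reg : IsSMulRegular M x) (i : ℕ)
    (h : Subsingleton (Ext.{u} (ModuleCat.of R (QuotSMulTop x M)) N (i + 1))) :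
    Subsingleton (Ext.{u} M N i) := by
  by_contra hne
  have : Nontrivial (Ext.{u} M N i) := not_subsingleton_iff_nontrivial.1 hne
  have hjac : x ∈ (annihilator R (Ext.{u} M N i)).jacobson := maximalIdeal_le_jacobson _ hx
  refine Submodule.top_ne_pointwise_smul_of_mem_jacobson_annihilator hjac
    (top_le_iff.1 fun y _ => ?_).symm
  obtain ⟨z, hz⟩ := Ext.contravariant_sequence_exact₁ reg.smulShortComplex_shortExact N y
    (add_comm 1 i) (@Subsingleton.elim _ h _ _)
  have hsmul (z : Ext.{u} M N i) : (Ext.mk₀ (x • 𝟙 M)).comp z (zero_add i) = x • z := by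
    rw [Ext.mk₀_smul, Ext.smul_comp, Ext.mk₀_id_comp]
  rw [← hz]
  exact (hsmul z).symm ▸ Submodule.smul_mem_pointwise_smul _ x ⊤ trivial

theorem exists_injective_residueField_of_supportDim_lt (e p : ℕ) (M : ModuleCat.{u} R)
    [Module.Finite R M] [Nontrivial M] (hp : HasProjectiveDimensionLE M p)
    (he : supportDim R M < e) :
    ∃ N : ModuleCat.{u} R, Module.Finite R N ∧ HasProjectiveDimensionLT N (p + e) ∧
      ∃ f : ResidueField R →ₗ[R] N, Function.Injective f := by
  induction e generalizing p M with
  | zero => exact absurd (WithBot.lt_coe_bot.1 he) (supportDim_ne_bot_of_nontrivial R M)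
  | succ e ih =>
    rcases exists_isSMulRegular_or_exists_injective_residueField (R := R) M with
      ⟨x, hx, reg⟩ | hf
    · have := nontrivial_quotSMulTop_of_mem_maximalIdeal M hx
      have hdim : supportDim R (QuotSMulTop x M) < e := by
        rw [← supportDim_quotSMulTop_succ_eq_supportDim reg hx] at he
        exact lt_of_add_lt_add_right he
      obtain ⟨N, hfin, hN, hf⟩ := ih (p + 1) (ModuleCat.of R (QuotSMulTop x M))
        (reg.smulShortComplex_shortExact.hasProjectiveDimensionLT_X₃ (p + 1) hp
          (hasProjectiveDimensionLT_of_ge M (p + 1) (p + 1 + 1) (Nat.le_succ _))) hdim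
      exact ⟨N, hfin, by rwa [add_assoc, add_comm 1 e] at hN, hf⟩
    · exact ⟨M, ‹_›, hasProjectiveDimensionLT_of_ge M (p + 1) _ (by lia), hf⟩

theorem subsingleton_ext_residueField_of_ringKrullDim_lt (Y : ModuleCat.{u} R) (n : ℕ)
    [HasInjectiveDimensionLE Y n] (hn : ringKrullDim R < n) :
    Subsingleton (Ext.{u} (ModuleCat.of R (ResidueField R)) Y n) := by
  have : CategoryTheory.Projective (ModuleCat.of R R) :=
    (IsProjective.iff_projective (R := R) R).1 inferInstance
  obtain ⟨N, -, hN, f, hf⟩ := exists_injective_residueField_of_supportDim_lt n 0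
    (ModuleCat.of R R) inferInstance (by rwa [← supportDim_self_eq_ringKrullDim] at hn)
  refine contravariant_subsingleton_ext_X₁
    (isSES_mkQ_range (A := ModuleCat.of R (ResidueField R)) hf).shortExact Y n ?_ ?_
  · exact hN.subsingleton N _ n (zero_add n).le Y
  · exact HasInjectiveDimensionLT.subsingleton Y (n + 1) (n + 1) le_rfl _

theorem subsingleton_ext_of_equiv_quotient_prime (Y N : ModuleCat.{u} R) [Module.Finite R Y]
    [Module.Finite R N] (n : ℕ) [HasInjectiveDimensionLE Y n]
    (hk : Subsingleton (Ext.{u} (ModuleCat.of R (ResidueField R)) Y n))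
    (p : Ideal R) [p.IsPrime] (e : N ≃ₗ[R] R ⧸ p) :
    Subsingleton (Ext.{u} N Y n) := by
  rcases (le_maximalIdeal (Ideal.IsPrime.ne_top' (I := p))).eq_or_lt with rfl | hlt
  · exact subsingleton_ext_of_iso e.symm.toModuleIso Y n hk
  · obtain ⟨x, hx, hxp⟩ := SetLike.exists_of_lt hlt
    have reg : IsSMulRegular N x :=
      (e.isSMulRegular_congr x).2 (isSMulRegular_quotient_of_notMem hxp)
    exact subsingleton_ext_of_subsingleton_ext_quotSMulTop N Y hx reg n
      (HasInjectiveDimensionLT.subsingleton Y (n + 1) (n + 1) le_rfl _)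

theorem subsingleton_ext_of_subsingleton_ext_residueField (Y N : ModuleCat.{u} R)
    [Module.Finite R Y] [Module.Finite R N] (n : ℕ) [HasInjectiveDimensionLE Y n]
    (hk : Subsingleton (Ext.{u} (ModuleCat.of R (ResidueField R)) Y n)) :
    Subsingleton (Ext.{u} N Y n) := by
  refine IsNoetherianRing.induction_on_isQuotientEquivQuotientPrime R (M := N) ‹Module.Finite R N›
    (motive := fun N _ _ _ => Subsingleton (Ext.{u} (ModuleCat.of R N) Y n)) ?_ ?_ ?_
  · intro N _ _ _ _
    have := (ModuleCat.isZero_of_subsingleton (ModuleCat.of R N)).hasProjectiveDimensionLT_zero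
    exact HasProjectiveDimensionLT.subsingleton _ 0 n n.zero_le Y
  · intro N _ _ hN p e
    have : Module.Finite R (ModuleCat.of R N) := hN
    exact subsingleton_ext_of_equiv_quotient_prime Y (ModuleCat.of R N) n hk p.1 e
  · intro N₁ _ _ _ N₂ _ _ _ N₃ _ _ _ f g hf hg hfg h₁ h₃
    have hS : IsSES R (A := ModuleCat.of R N₁) (B := ModuleCat.of R N₂) (C := ModuleCat.of R N₃)
      f g := ⟨hf, hfg, hg⟩
    exact contravariant_subsingleton_ext_X₂ hS.shortExact Y n h₁ h₃

theorem hasInjectiveDimensionLT_of_hasInjectiveDimensionLE_of_ringKrullDim_lt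
    (Y : ModuleCat.{u} R) [Module.Finite R Y] (n : ℕ) [HasInjectiveDimensionLE Y n]
    (hn : ringKrullDim R < n) : HasInjectiveDimensionLT Y n := by
  cases n with
  | zero => exact absurd hn ringKrullDim_nonneg_of_nontrivial.not_gt
  | succ n =>
    exact hasInjectiveDimensionLE_of_subsingleton_ext_quotient Y n fun I =>
      have : Module.Finite R (ModuleCat.of R (R ⧸ I)) :=
        inferInstanceAs (Module.Finite R (R ⧸ I))
      subsingleton_ext_of_subsingleton_ext_residueField Y _ (n + 1)
        (subsingleton_ext_residueField_of_ringKrullDim_lt Y (n + 1) hn)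

theorem hasInjectiveDimensionLT_of_ringKrullDim_lt (Y : ModuleCat.{u} R) [Module.Finite R Y]
    {m n : ℕ} (hY : HasInjectiveDimensionLT Y m) (hn : ringKrullDim R < n) :
    HasInjectiveDimensionLT Y n := by
  suffices ∀ k, HasInjectiveDimensionLT Y (n + k) → HasInjectiveDimensionLT Y n from
    this m (hasInjectiveDimensionLT_of_ge Y m _ (Nat.le_add_left m n))
  intro k hk
  induction k with
  | zero => exact hk
  | succ k ih =>
    have : HasInjectiveDimensionLE Y (n + k) := hk
    have hnk : ringKrullDim R < (n + k : ℕ) :=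
      hn.trans_le (by exact_mod_cast Nat.le_add_right n k)
    exact ih (hasInjectiveDimensionLT_of_hasInjectiveDimensionLE_of_ringKrullDim_lt Y (n + k) hnk)

theorem subsingleton_ext_of_forall_subsingleton_ext_residueField (Y M : ModuleCat.{u} R)
    [Module.Finite R Y] [Module.Finite R M] (n t : ℕ) [HasInjectiveDimensionLT Y n]
    (hM : ∀ j < t, Subsingleton (Ext.{u} (ModuleCat.of R (ResidueField R)) M j))
    {i : ℕ} (hi : n ≤ i + t) : Subsingleton (Ext.{u} M Y i) := by
  induction t generalizing M i with
  | zero => exact HasInjectiveDimensionLT.subsingleton Y n i hi M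
  | succ t ih =>
    obtain ⟨x, hx, reg⟩ :=
      exists_isSMulRegular_of_subsingleton_ext_residueField M (hM 0 t.succ_pos)
    refine subsingleton_ext_of_subsingleton_ext_quotSMulTop M Y hx reg i
      (ih (ModuleCat.of R (QuotSMulTop x M)) (fun j hj => ?_) (by lia))
    exact covariant_subsingleton_ext_X₃ reg.smulShortComplex_shortExact _ j
      (hM j (by lia)) (hM (j + 1) (by lia))

end LocalRing

theorem exists_ringKrullDim_eq_natCast (R : Type*) [CommRing R] [FiniteRingKrullDim R] :
    ∃ d : ℕ, ringKrullDim R = d := by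
  obtain ⟨a, ha⟩ := WithBot.ne_bot_iff_exists.1 (ringKrullDim_ne_bot (R := R))
  obtain ⟨d, rfl⟩ := ENat.ne_top_iff_exists.1 fun h : a = ⊤ =>
    ringKrullDim_ne_top (R := R) (by rw [← ha, h]; rfl)
  exact ⟨d, ha.symm⟩

section MaximalCohenMacaulay

variable {R : Type u} [CommRing R] [IsLocalRing R] {M : ModuleCat.{u} R}

theorem IsMCM.subsingleton_ext_residueField (hM : IsMCM R M) {j : ℕ}
    (hj : (j : WithBot ℕ∞) < ringKrullDim R) :
    Subsingleton (Ext.{u} (ModuleCat.of R (ResidueField R)) M j) := by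
  have hlt : (j : ℕ∞) < moduleDepth R M := by exact_mod_cast hj.trans_le hM
  rw [← extVanish_iff_subsingleton_ext]
  exact not_not.1 fun hne => notMem_of_lt_csInf' hlt ⟨j, hne, rfl⟩

variable [IsNoetherianRing R] [Module.Finite R M]

theorem IsMCM.exists_isSMulRegular (hM : IsMCM R M) (hdim : 0 < ringKrullDim R) :
    ∃ x ∈ maximalIdeal R, IsSMulRegular M x :=
  exists_isSMulRegular_of_subsingleton_ext_residueField M (hM.subsingleton_ext_residueField hdim)

theorem IsMCM.subsingleton_ext (hM : IsMCM R M) (Y : ModuleCat.{u} R) [Module.Finite R Y] {m : ℕ}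
    (hY : HasInjectiveDimensionLE Y m) {i : ℕ} (hi : 0 < i) :
    Subsingleton (Ext.{u} M Y i) := by
  obtain ⟨d, hd⟩ := exists_ringKrullDim_eq_natCast R
  have : HasInjectiveDimensionLT Y (d + 1) :=
    hasInjectiveDimensionLT_of_ringKrullDim_lt Y hY (hd ▸ by exact_mod_cast d.lt_succ_self)
  exact subsingleton_ext_of_forall_subsingleton_ext_residueField Y M (d + 1) d
    (fun j hj => hM.subsingleton_ext_residueField (hd ▸ by exact_mod_cast hj)) (by lia)

end MaximalCohenMacaulay

section RightApproximation

variable {R : Type u} [CommRing R] {𝒳 : Set (ModuleCat.{u} R)}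

theorem IsSES.isRightApprox {A B C : ModuleCat.{u} R} {f : A →ₗ[R] B} {g : B →ₗ[R] C}
    (h : IsSES R f g) (hB : B ∈ 𝒳) (hA : ∀ W ∈ 𝒳, Subsingleton (Ext.{u} W A 1)) :
    IsRightApprox R 𝒳 g :=
  ⟨hB, fun W hW => h.exists_lift (hA W hW)⟩

theorem IsRightApprox.notMem {X M : ModuleCat.{u} R} [Nontrivial M] {f : X →ₗ[R] M}
    (hf : IsRightApprox R 𝒳 f) (hMX : Subsingleton (M →ₗ[R] X)) : M ∉ 𝒳 := by
  intro hM
  obtain ⟨s, hs⟩ := hf.2 M hM LinearMap.id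
  obtain ⟨m, hm⟩ := exists_ne (0 : M)
  have hsm := LinearMap.congr_fun hs m
  rw [Subsingleton.elim s 0, LinearMap.comp_zero] at hsm
  exact hm hsm.symm

theorem subsingleton_linearMap_quotient_span_singleton {x : R} (hx : x ∈ nonZeroDivisors R) :
    Subsingleton ((R ⧸ Ideal.span {x}) →ₗ[R] R) :=
  IsSMulRegular.linearMap_subsingleton_of_mem_annihilator
    (Flat.isSMulRegular_of_nonZeroDivisors hx)
    (by rw [Ideal.annihilator_quotient]; exact Ideal.mem_span_singleton_self x)

end RightApproximation

theorem stmt2_general (R : Type u) [CommRing R] [IsNoetherianRing R] [IsLocalRing R]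
    (hG : IsGorensteinLocalRing R) (hdim : 0 < ringKrullDim R)
    (𝒳 : Set (ModuleCat.{u} R)) (hfin : ∀ M ∈ 𝒳, Module.Finite R M)
    (hR : ModuleCat.of R R ∈ 𝒳) (hMCM : ∀ M ∈ 𝒳, IsMCM R M) :
    ¬ ContravariantlyInfinite R 𝒳 ∧
      ∀ x ∈ maximalIdeal R, x ∈ nonZeroDivisors R →
        ModuleCat.of R (R ⧸ Ideal.span {x}) ∉ 𝒳 ∧
          HasRightApprox R 𝒳 (ModuleCat.of R (R ⧸ Ideal.span {x})) := by
  have : Module.Finite R (ModuleCat.of R R) := hfin _ hR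
  obtain ⟨n, hn⟩ := hG.exists_hasInjectiveDimensionLE
  have hExt : ∀ W ∈ 𝒳, Subsingleton (Ext.{u} W (ModuleCat.of R R) 1) := fun W hW =>
    have := hfin W hW
    (hMCM W hW).subsingleton_ext _ hn one_pos
  have hquot : ∀ x ∈ maximalIdeal R, x ∈ nonZeroDivisors R →
      ModuleCat.of R (R ⧸ Ideal.span {x}) ∉ 𝒳 ∧
        HasRightApprox R 𝒳 (ModuleCat.of R (R ⧸ Ideal.span {x})) := fun x hxm hx => by
    have happrox := (isSES_lsmul_mkQ hx).isRightApprox hR hExt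
    have : Nontrivial (R ⧸ Ideal.span {x}) :=
      Ideal.Quotient.nontrivial_iff.2 (mt Ideal.span_singleton_eq_top.1 hxm)
    exact ⟨happrox.notMem (subsingleton_linearMap_quotient_span_singleton hx), _, _, happrox⟩
  refine ⟨fun hinf => ?_, hquot⟩
  obtain ⟨x, hxm, hx⟩ := (hMCM _ hR).exists_isSMulRegular hdim
  obtain ⟨hnotMem, happrox⟩ := hquot x hxm
    (mem_nonZeroDivisors_iff_left.2 fun y hxy => hx (by simpa using hxy))
  exact hinf _ (inferInstanceAs (Module.Finite R (R ⧸ Ideal.span {x}))) hnotMem happrox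

/-- Over a Gorenstein local ring of positive dimension, a resolving
subcategory all of whose members are maximal Cohen–Macaulay is not contravariantly
infinite: `R/(x)` for any `R`-regular `x ∈ 𝔪` lies outside `𝒳` and admits a right
`𝒳`-approximation. -/
theorem stmt2 (R : Type u) [CommRing R] [IsNoetherianRing R] [IsLocalRing R]
    (hG : IsGorensteinLocalRing R) (hdim : 0 < ringKrullDim R)
    (𝒳 : Set (ModuleCat.{u} R)) (h𝒳 : IsResolving R 𝒳) (hMCM : ∀ M ∈ 𝒳, IsMCM R M) :
    ¬ ContravariantlyInfinite R 𝒳 ∧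
      ∀ x ∈ maximalIdeal R, x ∈ nonZeroDivisors R →
        ModuleCat.of R (R ⧸ Ideal.span {x}) ∉ 𝒳 ∧
          HasRightApprox R 𝒳 (ModuleCat.of R (R ⧸ Ideal.span {x})) :=
  stmt2_general R hG hdim 𝒳 h𝒳.finite
    (h𝒳.freeMem _ (inferInstanceAs (Module.Finite R R)) (inferInstanceAs (Module.Free R R))) hMCM
end
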